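/- arXiv:2506.04208 — 4 statements merged into one kernel-verified Lean document; each statement's English description precedes it below -/
import Mathlib

section
/- Let K ⊆ ℝ^m be a subspace, let 0 ≤ ε₁ < 1 and 0 ≤ ε₂ < 1, let Ω₁ ∈ ℝ^{s₁×m} be an ε₁-subspace embedding for K, and let Ω₂ ∈ ℝ^{s₂×s₁} be an ε₂-subspace embedding for the image subspace Ω₁(K) ⊆ ℝ^{s₁}. Set ε_s = ε₁ + ε₂ − ε₁ε₂ and ε_b = ε₁ + ε₂ + ε₁ε₂. Then for every x ∈ K, √(1−ε_s)·‖x‖₂ ≤ ‖Ω₂Ω₁x‖₂ ≤ √(1+ε_b)·‖x‖₂. -/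
open scoped BigOperators

/-- Euclidean 2-norm of a vector in `Fin m → ℝ`. -/
noncomputable def evNorm {m : ℕ} (x : Fin m → ℝ) : ℝ :=
  Real.sqrt (∑ i, x i ^ 2)

/-- Euclidean inner product of vectors in `Fin m → ℝ`. -/
noncomputable def evInner {m : ℕ} (x y : Fin m → ℝ) : ℝ :=
  ∑ i, x i * y i

/-- `[X]_g`: the maximum Euclidean 2-norm among the columns of `X`. -/
noncomputable def gMax {m n : ℕ} (X : Matrix (Fin m) (Fin n) ℝ) : ℝ :=
  ⨆ j : Fin n, evNorm (fun i => X i j)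

/-- `‖X‖_g = √n · [X]_g` where `n` is the number of columns of `X`. -/
noncomputable def gNorm {m n : ℕ} (X : Matrix (Fin m) (Fin n) ℝ) : ℝ :=
  Real.sqrt n * gMax X

/-- Spectral norm (largest singular value): supremum of `‖Xv‖₂` over unit vectors `v`. -/
noncomputable def matrixSpectralNorm {m n : ℕ} (X : Matrix (Fin m) (Fin n) ℝ) : ℝ :=
  ⨆ v : {v : Fin n → ℝ // evNorm v = 1}, evNorm (X.mulVec v.1)

/-- Smallest singular value: infimum of `‖Xv‖₂` over unit vectors `v`. -/
noncomputable def sigmaMin {m n : ℕ} (X : Matrix (Fin m) (Fin n) ℝ) : ℝ :=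
  ⨅ v : {v : Fin n → ℝ // evNorm v = 1}, evNorm (X.mulVec v.1)

/-- Frobenius norm of a real matrix. -/
noncomputable def frobeniusNorm {m n : ℕ} (X : Matrix (Fin m) (Fin n) ℝ) : ℝ :=
  Real.sqrt (∑ i, ∑ j, X i j ^ 2)

/-- `Ω` is an `ε`-subspace embedding for the subspace `K ⊆ ℝ^m`. -/
def IsSubspaceEmbedding {s m : ℕ} (ε : ℝ) (Ω : Matrix (Fin s) (Fin m) ℝ)
    (K : Submodule ℝ (Fin m → ℝ)) : Prop :=
  ∀ x ∈ K, ∀ y ∈ K,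
    |evInner x y - evInner (Ω.mulVec x) (Ω.mulVec y)| ≤ ε * evNorm x * evNorm y

/-- Column space of a matrix: the span of its columns. -/
noncomputable def colSpace {m n : ℕ} (X : Matrix (Fin m) (Fin n) ℝ) :
    Submodule ℝ (Fin m → ℝ) :=
  Submodule.span ℝ (Set.range fun j : Fin n => fun i => X i j)

/-- Multi-sketching of vectors: if `Ω₁` is an `ε₁`-subspace embedding for `K` and
`Ω₂` is an `ε₂`-subspace embedding for `Ω₁(K)`, then for all `x ∈ K`,
`√(1−ε_s)·‖x‖₂ ≤ ‖Ω₂Ω₁x‖₂ ≤ √(1+ε_b)·‖x‖₂`, where `ε_s = ε₁+ε₂−ε₁ε₂`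
and `ε_b = ε₁+ε₂+ε₁ε₂`. -/
theorem multiSketch_vector_bounds {s₁ s₂ m : ℕ} {ε₁ ε₂ : ℝ}
    (hε₁0 : 0 ≤ ε₁) (hε₁1 : ε₁ < 1) (hε₂0 : 0 ≤ ε₂) (hε₂1 : ε₂ < 1)
    (K : Submodule ℝ (Fin m → ℝ))
    (Ω₁ : Matrix (Fin s₁) (Fin m) ℝ) (Ω₂ : Matrix (Fin s₂) (Fin s₁) ℝ)
    (hΩ₁ : IsSubspaceEmbedding ε₁ Ω₁ K)
    (hΩ₂ : IsSubspaceEmbedding ε₂ Ω₂ (K.map Ω₁.mulVecLin)) :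
    ∀ x ∈ K,
      Real.sqrt (1 - (ε₁ + ε₂ - ε₁ * ε₂)) * evNorm x ≤
          evNorm (Ω₂.mulVec (Ω₁.mulVec x)) ∧
        evNorm (Ω₂.mulVec (Ω₁.mulVec x)) ≤
          Real.sqrt (1 + (ε₁ + ε₂ + ε₁ * ε₂)) * evNorm x := by
  intro x hx
  have key : ∀ {n : ℕ} (v : Fin n → ℝ), evInner v v = evNorm v ^ 2 := by
    intro n v
    unfold evInner evNorm
    rw [Real.sq_sqrt (Finset.sum_nonneg fun i _ => sq_nonneg _)]
    exact Finset.sum_congr rfl fun i _ => (sq (v i)).symm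
  have nn : ∀ {n : ℕ} (v : Fin n → ℝ), 0 ≤ evNorm v := fun v => Real.sqrt_nonneg _
  have h1 := hΩ₁ x hx x hx
  have hm : Ω₁.mulVec x ∈ K.map Ω₁.mulVecLin := ⟨x, hx, rfl⟩
  have h2 := hΩ₂ _ hm _ hm
  simp only [key] at h1 h2
  have ha := nn x
  have hc := nn (Ω₂.mulVec (Ω₁.mulVec x))
  generalize evNorm (Ω₂.mulVec (Ω₁.mulVec x)) = c at *
  generalize evNorm (Ω₁.mulVec x) = b at *
  generalize evNorm x = a at *
  rw [abs_le] at h1 h2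
  obtain ⟨h1a, h1b⟩ := h1
  obtain ⟨h2a, h2b⟩ := h2
  constructor
  · refine abs_le_of_sq_le_sq' ?_ hc |>.2
    rw [mul_pow, Real.sq_sqrt (by nlinarith)]
    have : (1 - ε₂) * ((1 - ε₁) * a ^ 2) ≤ (1 - ε₂) * b ^ 2 :=
      mul_le_mul_of_nonneg_left (by nlinarith) (by linarith)
    nlinarith
  · refine abs_le_of_sq_le_sq' ?_ (mul_nonneg (Real.sqrt_nonneg _) ha) |>.2
    rw [mul_pow, Real.sq_sqrt (by positivity)]
    have : (1 + ε₂) * b ^ 2 ≤ (1 + ε₂) * ((1 + ε₁) * a ^ 2) :=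
      mul_le_mul_of_nonneg_left (by nlinarith) (by linarith)
    nlinarith
end

section
/- Let X ∈ ℝ^{m×n}, let 0 ≤ ε₁ < 1 and 0 ≤ ε₂ < 1, let Ω₁ ∈ ℝ^{s₁×m} be an ε₁-subspace embedding for the column space of X, and let Ω₂ ∈ ℝ^{s₂×s₁} be an ε₂-subspace embedding for the column space of Ω₁X. Set ε_s = ε₁ + ε₂ − ε₁ε₂ and ε_b = ε₁ + ε₂ + ε₁ε₂. Then the spectral norms satisfy √(1−ε_s)·‖X‖₂ ≤ ‖Ω₂Ω₁X‖₂ ≤ √(1+ε_b)·‖X‖₂. -/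
open scoped BigOperators

/-- Spectral norm (largest singular value): supremum of `‖Xv‖₂` over unit vectors `v`. -/
noncomputable def matSpectralNorm {m n : ℕ} (X : Matrix (Fin m) (Fin n) ℝ) : ℝ :=
  ⨆ v : {v : Fin n → ℝ // evNorm v = 1}, evNorm (X.mulVec v.1)

theorem le_of_sq_le_sq_aux {a b : ℝ} (h : a ^ 2 ≤ b ^ 2) (hb : 0 ≤ b) : a ≤ b :=
  (le_abs_self a).trans (abs_le_of_sq_le_sq h hb)

theorem evNorm_sq' {m : ℕ} (x : Fin m → ℝ) : evNorm x ^ 2 = ∑ i, x i ^ 2 :=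
  Real.sq_sqrt (Finset.sum_nonneg fun _ _ => sq_nonneg _)

theorem evNorm_nonneg' {m : ℕ} (x : Fin m → ℝ) : 0 ≤ evNorm x := Real.sqrt_nonneg _

theorem evInner_self' {m : ℕ} (x : Fin m → ℝ) : evInner x x = evNorm x ^ 2 := by
  rw [evNorm_sq']
  exact Finset.sum_congr rfl fun i _ => (sq (x i)).symm

theorem mulVec_mem_colSpace {m n : ℕ} (X : Matrix (Fin m) (Fin n) ℝ) (v : Fin n → ℝ) :
    X.mulVec v ∈ colSpace X := by
  have h : X.mulVec v = ∑ j, v j • (fun i => X i j) := by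
    ext i
    simp [Matrix.mulVec, dotProduct, Finset.sum_apply, mul_comm]
  rw [h]
  exact Submodule.sum_mem _ fun j _ =>
    Submodule.smul_mem _ _ (Submodule.subset_span ⟨j, rfl⟩)

theorem bdd_spectral {m n : ℕ} (X : Matrix (Fin m) (Fin n) ℝ) :
    BddAbove (Set.range fun v : {v : Fin n → ℝ // evNorm v = 1} => evNorm (X.mulVec v.1)) := by
  refine ⟨frobeniusNorm X, ?_⟩
  rintro _ ⟨⟨v, hv⟩, rfl⟩
  refine Real.sqrt_le_sqrt (Finset.sum_le_sum fun i _ => ?_)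
  have h := Finset.sum_mul_sq_le_sq_mul_sq Finset.univ (fun j => X i j) v
  rw [← evNorm_sq' v, hv, one_pow, mul_one] at h
  exact h

theorem embed_sq {s m : ℕ} {ε : ℝ} {Ω : Matrix (Fin s) (Fin m) ℝ}
    {K : Submodule ℝ (Fin m → ℝ)} (h : IsSubspaceEmbedding ε Ω K) {x : Fin m → ℝ} (hx : x ∈ K) :
    (1 - ε) * evNorm x ^ 2 ≤ evNorm (Ω.mulVec x) ^ 2 ∧
      evNorm (Ω.mulVec x) ^ 2 ≤ (1 + ε) * evNorm x ^ 2 := by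
  have h1 := abs_le.1 (h x hx x hx)
  rw [evInner_self', evInner_self'] at h1
  constructor <;> nlinarith [h1.1, h1.2]

/-- Multi-sketching, spectral norm: `√(1−ε_s)·‖X‖₂ ≤ ‖Ω₂Ω₁X‖₂ ≤ √(1+ε_b)·‖X‖₂`. -/
theorem multiSketch_spectralNorm_bounds {s₁ s₂ m n : ℕ} {ε₁ ε₂ : ℝ}
    (hε₁0 : 0 ≤ ε₁) (hε₁1 : ε₁ < 1) (hε₂0 : 0 ≤ ε₂) (hε₂1 : ε₂ < 1)
    (X : Matrix (Fin m) (Fin n) ℝ)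
    (Ω₁ : Matrix (Fin s₁) (Fin m) ℝ) (Ω₂ : Matrix (Fin s₂) (Fin s₁) ℝ)
    (hΩ₁ : IsSubspaceEmbedding ε₁ Ω₁ (colSpace X))
    (hΩ₂ : IsSubspaceEmbedding ε₂ Ω₂ (colSpace (Ω₁ * X))) :
    Real.sqrt (1 - (ε₁ + ε₂ - ε₁ * ε₂)) * matSpectralNorm X ≤
        matSpectralNorm (Ω₂ * Ω₁ * X) ∧
      matSpectralNorm (Ω₂ * Ω₁ * X) ≤
        Real.sqrt (1 + (ε₁ + ε₂ + ε₁ * ε₂)) * matSpectralNorm X := by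
  have key : ∀ v : Fin n → ℝ,
      Real.sqrt (1 - (ε₁ + ε₂ - ε₁ * ε₂)) * evNorm (X.mulVec v) ≤
        evNorm ((Ω₂ * Ω₁ * X).mulVec v) ∧
      evNorm ((Ω₂ * Ω₁ * X).mulVec v) ≤
        Real.sqrt (1 + (ε₁ + ε₂ + ε₁ * ε₂)) * evNorm (X.mulVec v) := by
    intro v
    have a := embed_sq hΩ₁ (mulVec_mem_colSpace X v)
    have b := embed_sq hΩ₂ (mulVec_mem_colSpace (Ω₁ * X) v)
    rw [Matrix.mulVec_mulVec] at a b
    rw [← Matrix.mul_assoc] at b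
    have c1 := mul_le_mul_of_nonneg_left a.1 (sub_nonneg.2 hε₂1.le)
    have c2 := mul_le_mul_of_nonneg_left a.2 (by linarith : 0 ≤ 1 + ε₂)
    have p1 : 0 ≤ 1 - (ε₁ + ε₂ - ε₁ * ε₂) := by nlinarith
    have p2 : 0 ≤ 1 + (ε₁ + ε₂ + ε₁ * ε₂) := by positivity
    constructor
    · refine le_of_sq_le_sq_aux ?_ (evNorm_nonneg' _)
      rw [mul_pow, Real.sq_sqrt p1]
      linarith [b.1]
    · refine le_of_sq_le_sq_aux ?_ (mul_nonneg (Real.sqrt_nonneg _) (evNorm_nonneg' _))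
      rw [mul_pow, Real.sq_sqrt p2]
      linarith [b.2]
  have nn : ∀ {k : ℕ} (Y : Matrix (Fin k) (Fin n) ℝ), 0 ≤ matSpectralNorm Y :=
    fun Y => Real.iSup_nonneg fun _ => evNorm_nonneg' _
  constructor
  · conv_lhs => rw [matSpectralNorm, Real.mul_iSup_of_nonneg (Real.sqrt_nonneg _)]
    exact Real.iSup_le (fun v => (key v.1).1.trans (le_ciSup (bdd_spectral (Ω₂ * Ω₁ * X)) v)) (nn _)
  · exact Real.iSup_le (fun v => (key v.1).2.trans
      (mul_le_mul_of_nonneg_left (le_ciSup (bdd_spectral X) v) (Real.sqrt_nonneg _)))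
      (mul_nonneg (Real.sqrt_nonneg _) (nn _))
end

section
/- Let X ∈ ℝ^{m×n}, let 0 ≤ ε₁ < 1 and 0 ≤ ε₂ < 1, let Ω₁ ∈ ℝ^{s₁×m} be an ε₁-subspace embedding for the column space of X, and let Ω₂ ∈ ℝ^{s₂×s₁} be an ε₂-subspace embedding for the column space of Ω₁X. Set ε_s = ε₁ + ε₂ − ε₁ε₂ and ε_b = ε₁ + ε₂ + ε₁ε₂. Then the Frobenius norms satisfy √(1−ε_s)·‖X‖_F ≤ ‖Ω₂Ω₁X‖_F ≤ √(1+ε_b)·‖X‖_F. -/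
open scoped BigOperators

/-- Spectral norm (largest singular value): supremum of `‖Xv‖₂` over unit vectors `v`. -/
noncomputable def evSpectralNorm {m n : ℕ} (X : Matrix (Fin m) (Fin n) ℝ) : ℝ :=
  ⨆ v : {v : Fin n → ℝ // evNorm v = 1}, evNorm (X.mulVec v.1)

theorem embed_frob {s m n : ℕ} {ε : ℝ} (X : Matrix (Fin m) (Fin n) ℝ)
    (Ω : Matrix (Fin s) (Fin m) ℝ) (h : IsSubspaceEmbedding ε Ω (colSpace X)) :
    (1 - ε) * (∑ i, ∑ j, X i j ^ 2) ≤ ∑ i, ∑ j, (Ω * X) i j ^ 2 ∧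
      ∑ i, ∑ j, (Ω * X) i j ^ 2 ≤ (1 + ε) * (∑ i, ∑ j, X i j ^ 2) := by
  have key : ∀ j, |∑ i, X i j ^ 2 - ∑ i, (Ω * X) i j ^ 2| ≤ ε * ∑ i, X i j ^ 2 := by
    intro j
    have hm : (fun i => X i j) ∈ colSpace X := Submodule.subset_span ⟨j, rfl⟩
    have h1 := h _ hm _ hm
    have h2 : ∀ i, (Ω.mulVec fun i => X i j) i = (Ω * X) i j := fun i => rfl
    have h3 : 0 ≤ ∑ i, X i j ^ 2 := Finset.sum_nonneg fun i _ => sq_nonneg _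
    simp only [evInner, evNorm, h2, ← pow_two, mul_assoc] at h1
    rwa [Real.sq_sqrt h3] at h1
  rw [Finset.sum_comm, Finset.sum_comm (f := fun i j => (Ω * X) i j ^ 2), Finset.mul_sum,
    Finset.mul_sum]
  constructor
  · refine Finset.sum_le_sum fun j _ => ?_
    have := (abs_le.1 (key j)).2
    linarith
  · refine Finset.sum_le_sum fun j _ => ?_
    have := (abs_le.1 (key j)).1
    linarith

/-- Multi-sketching, Frobenius norm: `√(1−ε_s)·‖X‖_F ≤ ‖Ω₂Ω₁X‖_F ≤ √(1+ε_b)·‖X‖_F`. -/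
theorem multiSketch_frobeniusNorm_bounds {s₁ s₂ m n : ℕ} {ε₁ ε₂ : ℝ}
    (hε₁0 : 0 ≤ ε₁) (hε₁1 : ε₁ < 1) (hε₂0 : 0 ≤ ε₂) (hε₂1 : ε₂ < 1)
    (X : Matrix (Fin m) (Fin n) ℝ)
    (Ω₁ : Matrix (Fin s₁) (Fin m) ℝ) (Ω₂ : Matrix (Fin s₂) (Fin s₁) ℝ)
    (hΩ₁ : IsSubspaceEmbedding ε₁ Ω₁ (colSpace X))
    (hΩ₂ : IsSubspaceEmbedding ε₂ Ω₂ (colSpace (Ω₁ * X))) :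
    Real.sqrt (1 - (ε₁ + ε₂ - ε₁ * ε₂)) * frobeniusNorm X ≤
        frobeniusNorm (Ω₂ * Ω₁ * X) ∧
      frobeniusNorm (Ω₂ * Ω₁ * X) ≤
        Real.sqrt (1 + (ε₁ + ε₂ + ε₁ * ε₂)) * frobeniusNorm X := by
  obtain ⟨a1, a2⟩ := embed_frob X Ω₁ hΩ₁
  obtain ⟨b1, b2⟩ := embed_frob (Ω₁ * X) Ω₂ hΩ₂
  rw [← Matrix.mul_assoc] at b1 b2
  unfold frobeniusNorm
  rw [← Real.sqrt_mul (by nlinarith), ← Real.sqrt_mul (by positivity)]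
  constructor
  · apply Real.sqrt_le_sqrt
    have := mul_le_mul_of_nonneg_left a1 (sub_nonneg.2 hε₂1.le)
    linarith
  · apply Real.sqrt_le_sqrt
    have := mul_le_mul_of_nonneg_left a2 (by linarith : 0 ≤ 1 + ε₂)
    linarith
end

section
/- Let X ∈ ℝ^{m×n} be a nonzero sparse matrix that has at most v columns each containing at most t₁ nonzero entries, while every remaining column contains at most t₂ nonzero entries, and let c = max_{i,j} |x_{ij}| > 0 be the largest absolute value of an entry of X. Then the ratio η = c/‖X‖₂ satisfies 1/√(v·t₁ + n·t₂) ≤ η ≤ 1, where ‖X‖₂ is the spectral norm of X. -/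
open scoped BigOperators

theorem evNorm_mulVec_le_frob {m n : ℕ} (X : Matrix (Fin m) (Fin n) ℝ) (w : Fin n → ℝ)
    (hw : evNorm w = 1) : evNorm (X.mulVec w) ≤ Real.sqrt (∑ i, ∑ j, X i j ^ 2) := by
  unfold evNorm at *
  have hw' : ∑ j, w j ^ 2 = 1 := by
    rwa [Real.sqrt_eq_one] at hw
  apply Real.sqrt_le_sqrt
  apply Finset.sum_le_sum
  intro i _
  have := Finset.sum_mul_sq_le_sq_mul_sq Finset.univ (fun j => X i j) w
  rw [hw', mul_one] at this
  exact this

theorem frob_sq_le {m n v t₁ t₂ : ℕ} {c : ℝ}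
    (X : Matrix (Fin m) (Fin n) ℝ) (S : Finset (Fin n))
    (hScard : S.card ≤ v)
    (hdense : ∀ j ∈ S, Set.ncard {i : Fin m | X i j ≠ 0} ≤ t₁)
    (hsparse : ∀ j ∉ S, Set.ncard {i : Fin m | X i j ≠ 0} ≤ t₂)
    (hc : ∀ i j, |X i j| ≤ c) :
    ∑ i, ∑ j, X i j ^ 2 ≤ c ^ 2 * (v * t₁ + n * t₂) := by
  classical
  rw [Finset.sum_comm]
  have hcol : ∀ j, ∑ i, X i j ^ 2 ≤ c ^ 2 * (Set.ncard {i : Fin m | X i j ≠ 0} : ℝ) := by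
    intro j
    have h1 : Set.ncard {i : Fin m | X i j ≠ 0}
        = (Finset.univ.filter (fun i : Fin m => X i j ≠ 0)).card := by
      rw [← Set.ncard_coe_finset]
      simp
    rw [h1, mul_comm, ← nsmul_eq_mul, ← Finset.sum_const, Finset.sum_filter]
    apply Finset.sum_le_sum
    intro i _
    split_ifs with h
    · exact sq_le_sq' (abs_le.mp (hc i j)).1 (abs_le.mp (hc i j)).2
    · have h0 : X i j = 0 := not_not.mp h
      simp [h0]
  have hcol2 : ∀ j, ∑ i, X i j ^ 2 ≤ c ^ 2 * ((if j ∈ S then (t₁ : ℝ) else 0) + t₂) := by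
    intro j
    refine (hcol j).trans (mul_le_mul_of_nonneg_left ?_ (sq_nonneg c))
    split_ifs with h
    · have : ((Set.ncard {i : Fin m | X i j ≠ 0} : ℕ) : ℝ) ≤ t₁ := by exact_mod_cast hdense j h
      have h2 : (0 : ℝ) ≤ t₂ := Nat.cast_nonneg _
      linarith
    · have : ((Set.ncard {i : Fin m | X i j ≠ 0} : ℕ) : ℝ) ≤ t₂ := by exact_mod_cast hsparse j h
      linarith
  refine (Finset.sum_le_sum fun j _ => hcol2 j).trans ?_
  rw [← Finset.mul_sum, Finset.sum_add_distrib]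
  refine mul_le_mul_of_nonneg_left ?_ (sq_nonneg c)
  have hS : (S.card : ℝ) ≤ v := by exact_mod_cast hScard
  simp
  gcongr

/-- Sparse model bound on `η = c/‖X‖₂`: if `X ≠ 0` is sparse (at most `v` designated
columns with at most `t₁` nonzeros each, the rest with at most `t₂` nonzeros each)
and `c > 0` is the largest absolute value of an entry of `X`, then
`1/√(v·t₁ + n·t₂) ≤ c/‖X‖₂ ≤ 1`. -/
theorem sparse_eta_bounds {m n v t₁ t₂ : ℕ} {c : ℝ}
    (X : Matrix (Fin m) (Fin n) ℝ) (hX : X ≠ 0) (S : Finset (Fin n))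
    (hScard : S.card ≤ v)
    (hdense : ∀ j ∈ S, Set.ncard {i : Fin m | X i j ≠ 0} ≤ t₁)
    (hsparse : ∀ j ∉ S, Set.ncard {i : Fin m | X i j ≠ 0} ≤ t₂)
    (hc : IsGreatest (Set.range fun p : Fin m × Fin n => |X p.1 p.2|) c)
    (hcpos : 0 < c) :
    1 / Real.sqrt (v * t₁ + n * t₂) ≤ c / matSpectralNorm X ∧
      c / matSpectralNorm X ≤ 1 := by
  obtain ⟨⟨p, hp⟩, hub⟩ := hc
  have hle : ∀ i j, |X i j| ≤ c := fun i j => hub ⟨(i, j), rfl⟩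
  have hF := frob_sq_le X S hScard hdense hsparse hle
  have hbd : ∀ w : {w : Fin n → ℝ // evNorm w = 1},
      evNorm (X.mulVec w.1) ≤ c * Real.sqrt (v * t₁ + n * t₂) := by
    intro w
    refine (evNorm_mulVec_le_frob X w.1 w.2).trans ((Real.sqrt_le_sqrt hF).trans ?_)
    rw [Real.sqrt_mul (sq_nonneg c), Real.sqrt_sq hcpos.le]
  have hunit : evNorm (Pi.single p.2 (1 : ℝ) : Fin n → ℝ) = 1 := by
    unfold evNorm
    rw [Finset.sum_eq_single p.2]
    · simp
    · intro b _ hb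
      simp [hb]
    · simp
  have hcs : c ≤ matSpectralNorm X := by
    refine le_trans ?_ (le_ciSup (f := fun w : {w : Fin n → ℝ // evNorm w = 1} =>
      evNorm (X.mulVec w.1)) ⟨_, Set.forall_mem_range.mpr hbd⟩ ⟨_, hunit⟩)
    rw [← hp]
    simp only [Matrix.mulVec_single_one, evNorm]
    apply Real.abs_le_sqrt
    exact Finset.single_le_sum (f := fun i => X.col p.2 i ^ 2)
      (fun i _ => sq_nonneg _) (Finset.mem_univ p.1)
  have hspos : 0 < matSpectralNorm X := hcpos.trans_le hcs
  have hsle : matSpectralNorm X ≤ c * Real.sqrt (v * t₁ + n * t₂) := by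
    haveI : Nonempty {w : Fin n → ℝ // evNorm w = 1} := ⟨⟨_, hunit⟩⟩
    exact ciSup_le hbd
  refine ⟨?_, (div_le_one hspos).mpr hcs⟩
  have hNpos : 0 < Real.sqrt (v * t₁ + n * t₂) :=
    pos_of_mul_pos_right (hspos.trans_le hsle) hcpos.le
  rw [div_le_div_iff₀ hNpos hspos]
  linarith
end
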